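/- Define R(v,t) by: R(b,t) = 0 and R(r,t) = 1 for all t; R(v,0) = 1 for v ∉ {b,r}; and R(v,t) = (R⁺(v,t−1) + R⁻(v,t−1))/2 for v ∉ {b,r} and t > 0. Then for every vertex v the limit R(v) = lim_{t→∞} R(v,t) exists, and the function v ↦ R(v) is a Richman cost function on D. -/

import Mathlib

open Relation Filter

variable {V : Type*}

/-- `fplus E f v` is `f⁺(v) = sup_{w ∈ S(v)} f(w)`, where `S(v)` is the set of successors of `v`. -/
noncomputable def fplus (E : V → V → Prop) (f : V → ℝ) (v : V) : ℝ :=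
  sSup (f '' {w | E v w})

/-- `fminus E f v` is `f⁻(v) = inf_{u ∈ S(v)} f(u)`. -/
noncomputable def fminus (E : V → V → Prop) (f : V → ℝ) (v : V) : ℝ :=
  sInf (f '' {w | E v w})

/-- A Richman cost function: `R : V → [0,1]`, `R(b) = 0`, `R(r) = 1`, and
`R(v) = (R⁺(v) + R⁻(v))/2` for every `v ∉ {b, r}`. -/
def IsRichman (E : V → V → Prop) (b r : V) (R : V → ℝ) : Prop :=
  (∀ v, R v ∈ Set.Icc (0 : ℝ) 1) ∧ R b = 0 ∧ R r = 1 ∧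
    ∀ v, v ≠ b → v ≠ r → R v = (fplus E R v + fminus E R v) / 2

/-- The auxiliary function `R(v,t)`: `R(b,t) = 0`, `R(r,t) = 1`, `R(v,0) = 1` for `v ∉ {b,r}`,
and `R(v,t) = (R⁺(v,t-1) + R⁻(v,t-1))/2` for `v ∉ {b,r}`, `t > 0`. -/
noncomputable def Rseq [DecidableEq V] (E : V → V → Prop) (b r : V) : ℕ → V → ℝ
  | 0 => fun v => if v = b then 0 else 1
  | t + 1 => fun v =>
      if v = b then 0
      else if v = r then 1
      else (fplus E (Rseq E b r t) v + fminus E (Rseq E b r t) v) / 2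

/-!
The function `R(·, 0)` is the largest one with values in `[0, 1]` and boundary value `0` at `b`,
so `R(·, 1) ≤ R(·, 0)`. The map `f ↦ (f⁺ + f⁻) / 2` is monotone, hence `R(v, t)` decreases in `t`
and, being bounded below by `0`, converges. A maximum or minimum over finitely many successors
passes to pointwise limits, so the limit inherits the equation `R(v) = (R⁺(v) + R⁻(v)) / 2`.
-/

/-- The midrange `(f⁺(v) + f⁻(v)) / 2` of `f` over the successors of `v`: one step of the recursion
defining `R(v, t)`. Like `fplus` and `fminus`, it is meaningful only where `v` has a successor and
`f` is bounded on the successors of `v`. -/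
noncomputable def midrange (E : V → V → Prop) (f : V → ℝ) (v : V) : ℝ :=
  (fplus E f v + fminus E f v) / 2

section Successors

variable {E : V → V → Prop} {f g : V → ℝ} {v w : V} {a c : ℝ}

lemma le_fplus (hf : BddAbove (f '' {w | E v w})) (hw : E v w) : f w ≤ fplus E f v :=
  le_csSup hf (Set.mem_image_of_mem f hw)

lemma fminus_le (hf : BddBelow (f '' {w | E v w})) (hw : E v w) : fminus E f v ≤ f w :=
  csInf_le hf (Set.mem_image_of_mem f hw)

lemma fplus_le (hv : {w | E v w}.Nonempty) (hf : ∀ w, E v w → f w ≤ c) : fplus E f v ≤ c :=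
  csSup_le (hv.image f) (Set.forall_mem_image.2 hf)

lemma le_fminus (hv : {w | E v w}.Nonempty) (hf : ∀ w, E v w → a ≤ f w) : a ≤ fminus E f v :=
  le_csInf (hv.image f) (Set.forall_mem_image.2 hf)

lemma fplus_le_fplus (hv : {w | E v w}.Nonempty) (hg : BddAbove (g '' {w | E v w}))
    (hfg : ∀ w, E v w → f w ≤ g w) : fplus E f v ≤ fplus E g v :=
  fplus_le hv fun w hw => (hfg w hw).trans (le_fplus hg hw)

lemma fminus_le_fminus (hv : {w | E v w}.Nonempty) (hf : BddBelow (f '' {w | E v w}))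
    (hfg : ∀ w, E v w → f w ≤ g w) : fminus E f v ≤ fminus E g v :=
  le_fminus hv fun w hw => (fminus_le hf hw).trans (hfg w hw)

lemma midrange_le_midrange (hv : {w | E v w}.Nonempty) (hf : BddBelow (f '' {w | E v w}))
    (hg : BddAbove (g '' {w | E v w})) (hfg : ∀ w, E v w → f w ≤ g w) :
    midrange E f v ≤ midrange E g v :=
  div_le_div_of_nonneg_right
    (add_le_add (fplus_le_fplus hv hg hfg) (fminus_le_fminus hv hf hfg)) zero_le_two

lemma midrange_mem_Icc (hv : {w | E v w}.Nonempty) (hf : ∀ w, E v w → f w ∈ Set.Icc a c) :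
    midrange E f v ∈ Set.Icc a c := by
  obtain ⟨w, hw⟩ := hv
  have hsub : f '' {w | E v w} ⊆ Set.Icc a c := Set.image_subset_iff.2 hf
  have h_minus_plus : fminus E f v ≤ fplus E f v :=
    (fminus_le (bddBelow_Icc.mono hsub) hw).trans (le_fplus (bddAbove_Icc.mono hsub) hw)
  have h_minus : a ≤ fminus E f v := le_fminus ⟨w, hw⟩ fun u hu => (hf u hu).1
  have h_plus : fplus E f v ≤ c := fplus_le ⟨w, hw⟩ fun u hu => (hf u hu).2
  unfold midrange
  constructor <;> linarith

lemma fplus_eq_sup' (hfin : {w | E v w}.Finite) (hv : {w | E v w}.Nonempty) :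
    fplus E f v = hfin.toFinset.sup' (hfin.toFinset_nonempty.2 hv) f := by
  rw [Finset.sup'_eq_csSup_image, hfin.coe_toFinset, fplus]

lemma fminus_eq_inf' (hfin : {w | E v w}.Finite) (hv : {w | E v w}.Nonempty) :
    fminus E f v = hfin.toFinset.inf' (hfin.toFinset_nonempty.2 hv) f := by
  rw [Finset.inf'_eq_csInf_image, hfin.coe_toFinset, fminus]

lemma tendsto_midrange {ι : Type*} {l : Filter ι} {F : ι → V → ℝ}
    (hfin : {w | E v w}.Finite) (hv : {w | E v w}.Nonempty)
    (hF : ∀ w, E v w → Tendsto (fun i => F i w) l (nhds (f w))) :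
    Tendsto (fun i => midrange E (F i) v) l (nhds (midrange E f v)) := by
  have hF' : ∀ w ∈ hfin.toFinset, Tendsto (fun i => F i w) l (nhds (f w)) :=
    fun w hw => hF w (hfin.mem_toFinset.1 hw)
  simp only [midrange, fplus_eq_sup' hfin hv, fminus_eq_inf' hfin hv]
  exact ((Tendsto.finset_sup'_nhds_apply _ hF').add
    (Tendsto.finset_inf'_nhds_apply _ hF')).div_const 2

end Successors

section Recursion

variable [DecidableEq V] {E : V → V → Prop} {b r v : V}

lemma Rseq_apply_b (t : ℕ) : Rseq E b r t b = 0 := by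
  cases t <;> simp [Rseq]

lemma Rseq_apply_r (hbr : b ≠ r) (t : ℕ) : Rseq E b r t r = 1 := by
  cases t <;> simp [Rseq, hbr.symm]

lemma Rseq_zero_of_ne (hb : v ≠ b) : Rseq E b r 0 v = 1 :=
  if_neg hb

lemma Rseq_succ_of_ne (hb : v ≠ b) (hr : v ≠ r) (t : ℕ) :
    Rseq E b r (t + 1) v = midrange E (Rseq E b r t) v := by
  simp only [Rseq, if_neg hb, if_neg hr, midrange]

lemma Rseq_mem_Icc (hsucc : ∀ v, v ≠ b → v ≠ r → {w | E v w}.Nonempty) (t : ℕ) (v : V) :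
    Rseq E b r t v ∈ Set.Icc (0 : ℝ) 1 := by
  induction t generalizing v with
  | zero =>
    rcases eq_or_ne v b with rfl | hb
    · simp [Rseq_apply_b]
    · simp [Rseq_zero_of_ne hb]
  | succ t ih =>
    rcases eq_or_ne v b with rfl | hb
    · simp [Rseq_apply_b]
    rcases eq_or_ne v r with rfl | hr
    · simp [Rseq_apply_r hb.symm]
    rw [Rseq_succ_of_ne hb hr]
    exact midrange_mem_Icc (hsucc v hb hr) fun w _ => ih w

lemma antitone_Rseq (hsucc : ∀ v, v ≠ b → v ≠ r → {w | E v w}.Nonempty) :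
    Antitone (Rseq E b r) := by
  have hsub (s : Set V) (t : ℕ) : Rseq E b r t '' s ⊆ Set.Icc 0 1 :=
    Set.image_subset_iff.2 fun w _ => Rseq_mem_Icc hsucc t w
  refine antitone_nat_of_succ_le fun t => ?_
  induction t with
  | zero =>
    intro v
    rcases eq_or_ne v b with rfl | hb
    · simp only [Rseq_apply_b, le_refl]
    · exact (Rseq_mem_Icc hsucc 1 v).2.trans_eq (Rseq_zero_of_ne hb).symm
  | succ t ih =>
    intro v
    rcases eq_or_ne v b with rfl | hb
    · simp only [Rseq_apply_b, le_refl]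
    rcases eq_or_ne v r with rfl | hr
    · simp only [Rseq_apply_r hb.symm, le_refl]
    rw [Rseq_succ_of_ne hb hr, Rseq_succ_of_ne hb hr]
    exact midrange_le_midrange (hsucc v hb hr) (bddBelow_Icc.mono (hsub _ _))
      (bddAbove_Icc.mono (hsub _ _)) fun w _ => ih w

lemma tendsto_Rseq_iInf (hsucc : ∀ v, v ≠ b → v ≠ r → {w | E v w}.Nonempty) (v : V) :
    Tendsto (fun t => Rseq E b r t v) atTop (nhds (⨅ t, Rseq E b r t v)) :=
  tendsto_atTop_ciInf (fun _ _ hst => antitone_Rseq hsucc hst v)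
    ⟨0, Set.forall_mem_range.2 fun t => (Rseq_mem_Icc hsucc t v).1⟩

lemma isRichman_of_tendsto_Rseq {R : V → ℝ} (hbr : b ≠ r)
    (hfin : ∀ v, v ≠ b → v ≠ r → {w | E v w}.Finite)
    (hsucc : ∀ v, v ≠ b → v ≠ r → {w | E v w}.Nonempty)
    (hR : ∀ v, Tendsto (fun t => Rseq E b r t v) atTop (nhds (R v))) :
    IsRichman E b r R := by
  refine ⟨fun v => ?_, ?_, ?_, fun v hb hr => ?_⟩
  · exact isClosed_Icc.mem_of_tendsto (hR v) (.of_forall fun t => Rseq_mem_Icc hsucc t v)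
  · exact tendsto_nhds_unique (hR b) (by simp only [Rseq_apply_b, tendsto_const_nhds])
  · exact tendsto_nhds_unique (hR r) (by simp only [Rseq_apply_r hbr, tendsto_const_nhds])
  · have h_succ : Tendsto (fun t => Rseq E b r (t + 1) v) atTop (nhds (midrange E R v)) := by
      simp only [Rseq_succ_of_ne hb hr]
      exact tendsto_midrange (hfin v hb hr) (hsucc v hb hr) fun w _ => hR w
    exact tendsto_nhds_unique ((tendsto_add_atTop_iff_nat 1).2 (hR v)) h_succ

end Recursion

lemma exists_rel_of_reflTransGen_of_ne {E : V → V → Prop} {v u : V} (h : ReflTransGen E v u)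
    (hne : v ≠ u) : ∃ w, E v w :=
  let ⟨w, hw, _⟩ := h.cases_head.resolve_left hne
  ⟨w, hw⟩

theorem Rseq_tendsto_richman_general [DecidableEq V] (E : V → V → Prop) (b r : V)
    (hbr : b ≠ r)
    (hfin : ∀ v, v ≠ b → v ≠ r → {w | E v w}.Finite)
    (hsucc : ∀ v, v ≠ b → v ≠ r → {w | E v w}.Nonempty) :
    ∃ R : V → ℝ,
      (∀ v, Tendsto (fun t => Rseq E b r t v) atTop (nhds (R v))) ∧
      IsRichman E b r R :=
  ⟨fun v => ⨅ t, Rseq E b r t v, tendsto_Rseq_iInf hsucc,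
    isRichman_of_tendsto_Rseq hbr hfin hsucc (tendsto_Rseq_iInf hsucc)⟩

/-- For every vertex `v` the limit `R(v) = lim_{t→∞} R(v,t)` exists, and `v ↦ R(v)` is a
Richman cost function on `D`. -/
theorem Rseq_tendsto_richman [Fintype V] [DecidableEq V] (E : V → V → Prop) (b r : V)
    (hbr : b ≠ r)
    (hreach : ∀ v, ReflTransGen E v b ∨ ReflTransGen E v r) :
    ∃ R : V → ℝ,
      (∀ v, Tendsto (fun t => Rseq E b r t v) atTop (nhds (R v))) ∧
      IsRichman E b r R :=
  Rseq_tendsto_richman_general E b r hbr (fun v _ _ => Set.toFinite {w | E v w}) fun v hb hr =>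
    (hreach v).elim (exists_rel_of_reflTransGen_of_ne · hb) (exists_rel_of_reflTransGen_of_ne · hr)
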